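/- Let V, H, W, Z be real Hilbert spaces, let ι : V → H be an injective compact continuous linear map, and let A : V → W and B : V → Z be continuous linear operators such that Ker(A) ∩ Ker(B) = {0} and such that there exists a constant C > 0 with ‖v‖_V ≤ C(‖ιv‖_H + ‖Av‖_W) for all v ∈ V. Then the norm ‖v‖_V is equivalent to ‖Av‖_W + ‖Bv‖_Z: there exist constants m₁, m₂ > 0 such that m₁‖v‖_V ≤ ‖Av‖_W + ‖Bv‖_Z ≤ m₂‖v‖_V for all v ∈ V. -/

import Mathlib

/-!
A counterexample to the lower bound would be a sequence `u n` bounded above and away from zero in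
norm with `A (u n) → 0` and `B (u n) → 0`. Compactness of `ι` makes `ι (u n)` converge along a
subsequence, and the a priori estimate then makes that subsequence Cauchy in `V`. Its limit is a
nonzero vector of `Ker A ∩ Ker B`.
-/

open Filter Topology

section SeminormedSpaces

lemma cauchySeq_of_norm_le_mul_add {β E F G 𝓕 𝓖 : Type*} [Nonempty β] [SemilatticeSup β]
    [SeminormedAddCommGroup E] [SeminormedAddCommGroup F] [SeminormedAddCommGroup G]
    [FunLike 𝓕 E F] [AddMonoidHomClass 𝓕 E F] [FunLike 𝓖 E G] [AddMonoidHomClass 𝓖 E G]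
    {f : 𝓕} {g : 𝓖} {C : ℝ} (h : ∀ x, ‖x‖ ≤ C * (‖f x‖ + ‖g x‖)) {u : β → E}
    (hf : CauchySeq fun n ↦ f (u n)) (hg : CauchySeq fun n ↦ g (u n)) : CauchySeq u := by
  rw [cauchySeq_iff_tendsto_dist_atTop_0] at hf hg ⊢
  refine squeeze_zero (fun _ ↦ dist_nonneg) (fun n ↦ ?_) (by simpa using (hf.add hg).const_mul C)
  simpa only [dist_eq_norm, map_sub] using h (u n.1 - u n.2)

variable {𝕜 V H W : Type*} [NontriviallyNormedField 𝕜]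
  [SeminormedAddCommGroup V] [NormedSpace 𝕜 V]
  [SeminormedAddCommGroup H] [NormedSpace 𝕜 H]
  [SeminormedAddCommGroup W] [NormedSpace 𝕜 W]

lemma exists_shell_norm_map_lt_of_not_antilipschitzWith {T : V →ₗ[𝕜] W}
    (hT : ¬∃ K, AntilipschitzWith K T) :
    ∃ r > 0, ∀ ε > 0, ∃ x, r ≤ ‖x‖ ∧ ‖x‖ ≤ 1 ∧ ‖T x‖ < ε := by
  rw [antilipschitzWith_iff_exists_mul_le_norm] at hT
  push Not at hT
  obtain ⟨c, hc⟩ := NormedField.exists_one_lt_norm 𝕜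
  refine ⟨1 / ‖c‖, by positivity, fun ε hε ↦ ?_⟩
  obtain ⟨x, hx⟩ := hT ε hε
  have hx₀ : ‖x‖ ≠ 0 := fun h ↦ by
    rw [h, mul_zero] at hx
    exact hx.not_ge (norm_nonneg _)
  obtain ⟨d, hd, hlt, hge, -⟩ := rescale_to_shell_semi_normed hc one_pos hx₀
  refine ⟨d • x, hge, hlt.le, ?_⟩
  calc ‖T (d • x)‖ = ‖d‖ * ‖T x‖ := by rw [map_smul, norm_smul]
    _ < ‖d‖ * (ε * ‖x‖) := by gcongr
    _ = ε * ‖d • x‖ := by rw [norm_smul]; ring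
    _ ≤ ε := mul_le_of_le_one_right hε.le hlt.le

lemma exists_seq_shell_tendsto_zero_of_not_antilipschitzWith {T : V →ₗ[𝕜] W}
    (hT : ¬∃ K, AntilipschitzWith K T) :
    ∃ r > 0, ∃ u : ℕ → V, (∀ n, r ≤ ‖u n‖ ∧ ‖u n‖ ≤ 1) ∧
      Tendsto (fun n ↦ T (u n)) atTop (𝓝 0) := by
  obtain ⟨r, hr, hsmall⟩ := exists_shell_norm_map_lt_of_not_antilipschitzWith hT
  choose u hru hu hTu using fun n : ℕ ↦ hsmall (1 / ((n : ℝ) + 1)) (by positivity)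
  exact ⟨r, hr, u, fun n ↦ ⟨hru n, hu n⟩,
    squeeze_zero_norm (fun n ↦ (hTu n).le) tendsto_one_div_add_atTop_nhds_zero_nat⟩

lemma exists_subseq_tendsto_of_isCompactOperator [CompleteSpace V] {ι : V →ₗ[𝕜] H}
    {T : V →ₗ[𝕜] W} (hι : IsCompactOperator ι) {C : ℝ} (h : ∀ v, ‖v‖ ≤ C * (‖ι v‖ + ‖T v‖))
    {u : ℕ → V} (hu : Bornology.IsBounded (Set.range u)) (hT : CauchySeq fun n ↦ T (u n)) :
    ∃ (v : V) (φ : ℕ → ℕ), StrictMono φ ∧ Tendsto (u ∘ φ) atTop (𝓝 v) := by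
  obtain ⟨S, hS, hιS⟩ := hι.image_subset_compact_of_bounded hu
  obtain ⟨y, -, φ, hφ, hy⟩ := hS.tendsto_subseq fun n ↦ hιS ⟨u n, ⟨n, rfl⟩, rfl⟩
  have hcauchy : CauchySeq (u ∘ φ) :=
    cauchySeq_of_norm_le_mul_add h hy.cauchySeq (hT.comp_tendsto hφ.tendsto_atTop)
  obtain ⟨v, hv⟩ := cauchySeq_tendsto_of_complete hcauchy
  exact ⟨v, φ, hφ, hv⟩

end SeminormedSpaces

section NormEquivalence

variable {𝕜 V H W Z : Type*} [NontriviallyNormedField 𝕜]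
  [NormedAddCommGroup V] [NormedSpace 𝕜 V] [CompleteSpace V]
  [SeminormedAddCommGroup H] [NormedSpace 𝕜 H]
  [NormedAddCommGroup W] [NormedSpace 𝕜 W] [NormedAddCommGroup Z] [NormedSpace 𝕜 Z]

theorem exists_antilipschitzWith_of_injective_of_isCompactOperator {ι : V →ₗ[𝕜] H}
    {T : V →L[𝕜] W} (hι : IsCompactOperator ι) (hT : Function.Injective T) {C : ℝ}
    (h : ∀ v, ‖v‖ ≤ C * (‖ι v‖ + ‖T v‖)) : ∃ K, AntilipschitzWith K T := by
  by_contra hcon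
  obtain ⟨r, hr, u, hu, hTu⟩ :=
    exists_seq_shell_tendsto_zero_of_not_antilipschitzWith (T := (T : V →ₗ[𝕜] W)) hcon
  have hbdd : Bornology.IsBounded (Set.range u) :=
    isBounded_iff_forall_norm_le.2 ⟨1, Set.forall_mem_range.2 fun n ↦ (hu n).2⟩
  obtain ⟨v, φ, hφ, huv⟩ := exists_subseq_tendsto_of_isCompactOperator hι h hbdd hTu.cauchySeq
  have hTv : T v = 0 :=
    tendsto_nhds_unique ((T.continuous.tendsto v).comp huv) (hTu.comp hφ.tendsto_atTop)
  have hrv : r ≤ ‖v‖ := ge_of_tendsto' huv.norm fun n ↦ (hu (φ n)).1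
  rw [(map_eq_zero_iff T hT).1 hTv, norm_zero] at hrv
  exact hrv.not_gt hr

theorem abstract_poincare_norm_equivalence_general (ι : V →ₗ[𝕜] H) (A : V →L[𝕜] W)
    (B : V →L[𝕜] Z) (hι : IsCompactOperator ι) (hker : ∀ v, A v = 0 → B v = 0 → v = 0)
    (hcoer : ∃ C : ℝ, 0 < C ∧ ∀ v, ‖v‖ ≤ C * (‖ι v‖ + ‖A v‖)) :
    ∃ m₁ m₂ : ℝ, 0 < m₁ ∧ 0 < m₂ ∧
      ∀ v, m₁ * ‖v‖ ≤ ‖A v‖ + ‖B v‖ ∧ ‖A v‖ + ‖B v‖ ≤ m₂ * ‖v‖ := by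
  obtain ⟨C, hC, hcoer⟩ := hcoer
  have hinj : Function.Injective (A.prod B) := (injective_iff_map_eq_zero _).2 fun v hv ↦
    hker v (congrArg Prod.fst hv) (congrArg Prod.snd hv)
  have hest (v : V) : ‖v‖ ≤ C * (‖ι v‖ + ‖A.prod B v‖) :=
    calc ‖v‖ ≤ C * (‖ι v‖ + ‖A v‖) := hcoer v
      _ ≤ C * (‖ι v‖ + ‖A.prod B v‖) := by
        gcongr
        exact norm_fst_le (A.prod B v)
  obtain ⟨m, hm, hlower⟩ := antilipschitzWith_iff_exists_mul_le_norm.1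
    (exists_antilipschitzWith_of_injective_of_isCompactOperator hι hinj hest)
  refine ⟨m, ‖A‖ + ‖B‖ + 1, hm, by positivity, fun v ↦ ⟨?_, ?_⟩⟩
  · calc m * ‖v‖ ≤ ‖A.prod B v‖ := hlower v
      _ ≤ ‖A v‖ + ‖B v‖ := max_le_add_of_nonneg (norm_nonneg _) (norm_nonneg _)
  · calc ‖A v‖ + ‖B v‖ ≤ ‖A‖ * ‖v‖ + ‖B‖ * ‖v‖ := add_le_add (A.le_opNorm v) (B.le_opNorm v)
      _ ≤ (‖A‖ + ‖B‖ + 1) * ‖v‖ := by linarith [norm_nonneg v]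

end NormEquivalence

/-- Abstract Poincaré-type inequality, norm-equivalence form: under the hypotheses of
the abstract Poincaré lemma, the norm `‖v‖_V` is equivalent to `‖A v‖_W + ‖B v‖_Z`. -/
theorem abstract_poincare_norm_equivalence
    {V H W Z : Type*}
    [NormedAddCommGroup V] [InnerProductSpace ℝ V] [CompleteSpace V]
    [NormedAddCommGroup H] [InnerProductSpace ℝ H] [CompleteSpace H]
    [NormedAddCommGroup W] [InnerProductSpace ℝ W] [CompleteSpace W]
    [NormedAddCommGroup Z] [InnerProductSpace ℝ Z] [CompleteSpace Z]
    (ι : V →L[ℝ] H) (A : V →L[ℝ] W) (B : V →L[ℝ] Z)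
    (hι_inj : Function.Injective (⇑ι))
    (hι_cpt : IsCompactOperator (⇑ι))
    (hker : ∀ v : V, A v = 0 → B v = 0 → v = 0)
    (hcoer : ∃ C : ℝ, 0 < C ∧ ∀ v : V, ‖v‖ ≤ C * (‖ι v‖ + ‖A v‖)) :
    ∃ m₁ m₂ : ℝ, 0 < m₁ ∧ 0 < m₂ ∧
      ∀ v : V, m₁ * ‖v‖ ≤ ‖A v‖ + ‖B v‖ ∧ ‖A v‖ + ‖B v‖ ≤ m₂ * ‖v‖ := by
  exact abstract_poincare_norm_equivalence_general (ι : V →ₗ[ℝ] H) A B hι_cpt hker hcoer
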